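/- Let P*₁₀(u,v) be the g-edge obtained from the Petersen graph by deleting one edge uv. The set of values t ∈ ℝ/4ℤ for which there exists a modulo-4 flow f on P*₁₀(u,v) ∪ e₀ (where e₀ is a new edge joining u and v) with f(e) ∈ [1,3] ⊆ ℝ/4ℤ for every edge e of P*₁₀(u,v) and f(e₀) = t is exactly {0}. (That is, the closed 4-capacity of P*₁₀(u,v) is {0}.) -/

import Mathlib

open Finset


open Finset

/-- A finite multigraph given with a reference orientation: each edge `e` goes
from `src e` to `tgt e`.  An orientation of the graph is a sign function
`σ : E → ℤˣ` telling, for each edge, whether it keeps (`1`) or reverses (`-1`)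
its reference direction. -/
structure Multigraph where
  V : Type
  E : Type
  [fintV : Fintype V]
  [fintE : Fintype E]
  [decV : DecidableEq V]
  [decE : DecidableEq E]
  src : E → V
  tgt : E → V

attribute [instance] Multigraph.fintV Multigraph.fintE Multigraph.decV Multigraph.decE

/-- `f` is a flow with respect to the reference orientation: at every vertex the
sum over outgoing edges equals the sum over incoming edges. -/
def Multigraph.IsFlow (G : Multigraph) {M : Type*} [AddCommMonoid M] (f : G.E → M) : Prop :=
  ∀ v : G.V,
    ∑ e ∈ Finset.univ.filter (fun e => G.src e = v), f e =
    ∑ e ∈ Finset.univ.filter (fun e => G.tgt e = v), f e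

/-- `f` is a flow on the orientation `σ` of `G` (values of `f` are read in the
direction given by `σ`). -/
def Multigraph.IsFlowOn (G : Multigraph) {M : Type*} [AddCommGroup M]
    (σ : G.E → ℤˣ) (f : G.E → M) : Prop :=
  G.IsFlow (fun e => ((σ e : ℤ) • f e))

/-- The open interval `(a,b)` of `ℝ/rℤ`: the points traversed strictly clockwise
from `a` to `b`, with the convention `(a,a) = ℝ/rℤ \ {a}`. -/
noncomputable def openArc (r a b : ℝ) : Set (AddCircle r) :=
  (fun t : ℝ => (t : AddCircle r)) '' Set.Ioo a (a + (r - Int.fract ((a - b) / r) * r))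

/-- The closed interval `[a,b]` of `ℝ/rℤ`: the points traversed clockwise from
`a` to `b`, endpoints included, with the convention `[a,a] = {a}`. -/
noncomputable def closedArc (r a b : ℝ) : Set (AddCircle r) :=
  (fun t : ℝ => (t : AddCircle r)) '' Set.Icc a (a + Int.fract ((b - a) / r) * r)

/-- `G` has a circular nowhere-zero `r`-flow: an orientation together with a
real-valued flow all of whose values lie in `[1, r-1]`. -/
def Multigraph.HasCNZF (G : Multigraph) (r : ℝ) : Prop :=
  ∃ (σ : G.E → ℤˣ) (f : G.E → ℝ), G.IsFlowOn σ f ∧ ∀ e, f e ∈ Set.Icc (1:ℝ) (r - 1)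

/-- The circular flow number of `G`, as an extended real (`⊤` if `G` admits no
circular nowhere-zero `r`-flow for any `r`, e.g. if `G` has a bridge). -/
noncomputable def circFlowNumber (G : Multigraph) : EReal :=
  sInf {x : EReal | ∃ r : ℝ, x = (r : EReal) ∧ G.HasCNZF r}

/-- The graph `G ∪ e₀` obtained from `G` by adding one extra edge `e₀ = none`
joining `u` to `v`. -/
def Multigraph.addEdge (G : Multigraph) (u v : G.V) : Multigraph where
  V := G.V
  E := Option G.E
  src := fun e => e.elim u G.src
  tgt := fun e => e.elim v G.tgt

/-- The capacity of the capacitated g-edge `(G, cap)` with terminals `u,v`: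
all values `f e₀` of modular flows `f` on `G ∪ e₀` (over all orientations) whose
value on each edge `e` of `G` lies in the prescribed set `cap e`. -/
def CPcap (r : ℝ) (G : Multigraph) (cap : G.E → Set (AddCircle r)) (u v : G.V) :
    Set (AddCircle r) :=
  {t | ∃ (σ : Option G.E → ℤˣ) (f : Option G.E → AddCircle r),
        (G.addEdge u v).IsFlowOn σ f ∧ (∀ e : G.E, f (some e) ∈ cap e) ∧ f none = t}

/-- The open `r`-capacity `CP_r(G_{u,v})` of the g-edge `G_{u,v}`. -/
noncomputable def CP (r : ℝ) (G : Multigraph) (u v : G.V) : Set (AddCircle r) :=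
  CPcap r G (fun _ => openArc r 1 (r - 1)) u v

/-- A capacitated graph `(G, cap)` admits a flow respecting all capacities
(for `cap e = (1,4) ⊆ ℝ/5ℤ` everywhere this is a sub-5-MCNZF). -/
def HasCapFlow (r : ℝ) (G : Multigraph) (cap : G.E → Set (AddCircle r)) : Prop :=
  ∃ (σ : G.E → ℤˣ) (f : G.E → AddCircle r), G.IsFlowOn σ f ∧ ∀ e, f e ∈ cap e

/-- Deletion of the edge `e₀`. -/
def Multigraph.deleteEdge (G : Multigraph) (e₀ : G.E) : Multigraph where
  V := G.V
  E := {e : G.E // e ≠ e₀}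
  src := fun e => G.src e.1
  tgt := fun e => G.tgt e.1

/-- Degree of a vertex (loops count twice). -/
def Multigraph.degree (G : Multigraph) (v : G.V) : ℕ :=
  (Finset.univ.filter (fun e => G.src e = v)).card +
  (Finset.univ.filter (fun e => G.tgt e = v)).card

/-- The tail of edge `e` in the orientation `σ`. -/
def Multigraph.osrc (G : Multigraph) (σ : G.E → ℤˣ) (e : G.E) : G.V :=
  if σ e = 1 then G.src e else G.tgt e

/-- The head of edge `e` in the orientation `σ`. -/
def Multigraph.otgt (G : Multigraph) (σ : G.E → ℤˣ) (e : G.E) : G.V :=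
  if σ e = 1 then G.tgt e else G.src e

/-- An injective key used to pick one reference direction for each edge of the
Petersen graph. -/
def pkey (s : Finset (Fin 5)) : ℕ := ∑ i ∈ s, 2 ^ (i : ℕ)

/-- The Petersen graph: the Kneser graph on the 2-element subsets of a 5-element
set, two subsets adjacent when disjoint (each edge listed once, in the direction
of increasing key). -/
def petersen : Multigraph where
  V := {s : Finset (Fin 5) // s.card = 2}
  E := {p : {s : Finset (Fin 5) // s.card = 2} × {s : Finset (Fin 5) // s.card = 2} //
          Disjoint p.1.1 p.2.1 ∧ pkey p.1.1 < pkey p.2.1}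
  src := fun p => p.1.1
  tgt := fun p => p.1.2

/-! Suppose a modulo-4 flow on a cubic graph has values in `[1, 3]` off `e₀` and a nonzero value on
`e₀`. Lift its values to `(0, 4)` and subtract 2. Since degrees are odd, conservation modulo 4 makes
the net outflow of the centred values at each vertex `±2`; this defines `c : V → {±1}`. Summing over
a vertex set `X` gives `|2 ∑_X c| < |δ(X)| + 1`, so `2c` is a balanced valuation in the sense of
Jaeger. Taking `X = V` shows `∑ c = 0`, and taking for `X` a path on three vertices, where
`|δ(X)| ≤ 5`, shows that each vertex has at most one neighbour of its own colour.

In the Petersen graph the adjacency matrix satisfies `A² + A = 2I + J`. Hence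
`s(v) = c(v) ∑_{w ~ v} c(w)` satisfies `∑ (s² + s) = 20`. But `s(v)` is `-3` or `-1`, so every
summand is `6` or `0`, and 6 does not divide 20.

Conversely, the edges other than `e₀` are covered by two 9-cycles `C₁` and `C₂`, each missing one
end of `e₀`. The integer flow `C₁ + 2 C₂` is nonzero modulo 4 exactly off `e₀`.
-/

theorem units_zsmul_mem {M : Type*} [AddCommGroup M] {C : Set M} (hC : ∀ x ∈ C, -x ∈ C) (u : ℤˣ)
    {x : M} (hx : x ∈ C) : (u : ℤ) • x ∈ C := by
  rcases Int.units_eq_one_or u with rfl | rfl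
  · simpa using hx
  · simpa using hC x hx

theorem sum_abs_lt_card_add_one {ι : Type*} {y : ι → ℝ} {i₀ : ι} (h : ∀ i ≠ i₀, |y i| ≤ 1)
    (h₀ : |y i₀| < 2) (s : Finset ι) : ∑ i ∈ s, |y i| < #s + 1 := by
  classical
  by_cases hi₀ : i₀ ∈ s
  · rw [← insert_erase hi₀, sum_insert (notMem_erase _ _), card_insert_of_notMem (notMem_erase _ _)]
    have := sum_le_card_nsmul (s.erase i₀) (fun i => |y i|) 1 fun i hi => h i (ne_of_mem_erase hi)
    push_cast
    simp only [nsmul_eq_mul, mul_one] at this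
    linarith
  · have := sum_le_card_nsmul s (fun i => |y i|) 1 fun i hi => h i (ne_of_mem_of_not_mem hi hi₀)
    simp only [nsmul_eq_mul, mul_one] at this
    linarith

namespace Multigraph

section NetOut

variable (G : Multigraph) {M N : Type*}

/-- The net outflow at `v` of an edge labelling `f`, along the reference orientation. -/
def netOut [AddCommGroup M] (f : G.E → M) (v : G.V) : M :=
  ∑ e with G.src e = v, f e - ∑ e with G.tgt e = v, f e

variable {G}

theorem isFlow_iff_netOut_eq_zero [AddCommGroup M] {f : G.E → M} :
    G.IsFlow f ↔ ∀ v, G.netOut f v = 0 :=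
  forall_congr' fun _ => sub_eq_zero.symm

theorem netOut_map [AddCommGroup M] [AddCommGroup N] (φ : M →+ N) (f : G.E → M) (v : G.V) :
    G.netOut (fun e => φ (f e)) v = φ (G.netOut f v) := by
  simp only [netOut, map_sub, map_sum]

theorem netOut_sub_const [AddCommGroup M] (f : G.E → M) (a : M) (v : G.V) :
    G.netOut (fun e => f e - a) v =
      G.netOut f v - ((#{e | G.src e = v} : ℤ) - #{e | G.tgt e = v}) • a := by
  simp only [netOut, sum_sub_distrib, sum_const, sub_smul, natCast_zsmul]
  abel

theorem IsFlow.map [AddCommMonoid M] [AddCommMonoid N] {f : G.E → M} (hf : G.IsFlow f)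
    (φ : M →+ N) : G.IsFlow fun e => φ (f e) := fun v => by
  simpa only [map_sum] using congrArg φ (hf v)

theorem isFlow_iff_of_equiv [AddCommMonoid M] {G' : Multigraph} (α : G'.V ≃ G.V)
    (ε : G'.E ≃ G.E) (hsrc : ∀ e, G.src (ε e) = α (G'.src e))
    (htgt : ∀ e, G.tgt (ε e) = α (G'.tgt e)) {f' : G'.E → M} {f : G.E → M}
    (hf : ∀ e, f (ε e) = f' e) : G'.IsFlow f' ↔ G.IsFlow f := by
  refine α.forall_congr fun v => ?_
  simp only [sum_filter]
  rw [← ε.sum_comp, ← ε.sum_comp]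
  simp only [hsrc, htgt, hf, α.apply_eq_iff_eq]

end NetOut

section Capacity

variable {G : Multigraph} {M : Type*}

/-- Identifies the edges of `(G - e₀) ∪ e₀` with those of `G`, the added edge `none` being `e₀`. -/
def addEdgeDeleteEdgeEquiv (e₀ : G.E) : Option (G.deleteEdge e₀).E ≃ G.E :=
  Equiv.optionSubtypeNe e₀

theorem isFlow_addEdge_deleteEdge_iff [AddCommMonoid M] {e₀ : G.E}
    {f' : Option (G.deleteEdge e₀).E → M} {f : G.E → M}
    (hf : ∀ e, f (addEdgeDeleteEdgeEquiv e₀ e) = f' e) :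
    ((G.deleteEdge e₀).addEdge (G.src e₀) (G.tgt e₀)).IsFlow f' ↔ G.IsFlow f :=
  isFlow_iff_of_equiv (G := G) (G' := (G.deleteEdge e₀).addEdge (G.src e₀) (G.tgt e₀))
    (Equiv.refl G.V) (addEdgeDeleteEdgeEquiv e₀)
    (by rintro (_ | _) <;> rfl) (by rintro (_ | _) <;> rfl) hf

/-- A symmetric capacity set does not see the orientation, so the orientation can be fixed to be
the reference one. -/
theorem mem_CPcap_deleteEdge_iff {r : ℝ} {C : Set (AddCircle r)} (hC : ∀ x ∈ C, -x ∈ C)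
    (e₀ : G.E) {t : AddCircle r} :
    t ∈ CPcap r (G.deleteEdge e₀) (fun _ => C) (G.src e₀) (G.tgt e₀) ↔
      ∃ f : G.E → AddCircle r, G.IsFlow f ∧ (∀ e ≠ e₀, f e ∈ C) ∧ f e₀ = t := by
  constructor
  · rintro ⟨σ, f, hf, hfC, rfl⟩
    obtain ⟨g, hg⟩ : ∃ g : G.E → AddCircle r,
        ∀ e, g (addEdgeDeleteEdgeEquiv e₀ e) = (σ none : ℤ) • (σ e : ℤ) • f e :=
      ⟨(fun e' => (σ none : ℤ) • (σ e' : ℤ) • f e') ∘ (addEdgeDeleteEdgeEquiv e₀).symm,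
        fun e => by simp only [Function.comp_apply, Equiv.symm_apply_apply]⟩
    refine ⟨g, (isFlow_addEdge_deleteEdge_iff hg).1 ?_, fun e he => ?_, ?_⟩
    · exact IsFlow.map hf (zsmulAddGroupHom (σ none : ℤ))
    · exact (hg (some ⟨e, he⟩)).symm ▸ units_zsmul_mem hC _ (units_zsmul_mem hC _ (hfC _))
    · rw [← one_smul ℤ (f none), ← Int.units_coe_mul_self (σ none), mul_smul]
      exact hg none
  · rintro ⟨f, hf, hfC, rfl⟩
    exact ⟨1, fun e => f (addEdgeDeleteEdgeEquiv e₀ e),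
      (isFlow_addEdge_deleteEdge_iff fun _ => (one_smul ℤ _).symm).2 hf, fun e => hfC _ e.2, rfl⟩

end Capacity

section Cut

variable (G : Multigraph)

/-- The edge cut `δ(X)`: the edges with exactly one end in `X`. -/
def cut (X : Finset G.V) : Finset G.E :=
  {e | Xor (G.src e ∈ X) (G.tgt e ∈ X)}

/-- Jaeger's balanced valuations (here with integer values): vertex weightings whose sum over any
vertex set `X` is bounded in absolute value by the size of the cut `δ(X)`. -/
def IsBalancedValuation (w : G.V → ℤ) : Prop :=
  ∀ X : Finset G.V, |∑ v ∈ X, w v| ≤ #(G.cut X)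

/-- The underlying simple graph: parallel edges are merged and loops dropped. -/
def toSimpleGraph : SimpleGraph G.V :=
  SimpleGraph.fromRel fun u v => ∃ e, G.src e = u ∧ G.tgt e = v

instance : DecidableRel G.toSimpleGraph.Adj := by
  unfold toSimpleGraph
  infer_instance

variable {G}

theorem sum_netOut_eq {M : Type*} [AddCommGroup M] (f : G.E → M) (X : Finset G.V) :
    ∑ v ∈ X, G.netOut f v = ∑ e with G.src e ∈ X, f e - ∑ e with G.tgt e ∈ X, f e := by
  simp only [netOut, sum_sub_distrib, sum_fiberwise_eq_sum_filter]

theorem abs_sum_netOut_le {R : Type*} [AddCommGroup R] [LinearOrder R] [IsOrderedAddMonoid R]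
    (f : G.E → R) (X : Finset G.V) :
    |∑ v ∈ X, G.netOut f v| ≤ ∑ e ∈ G.cut X, |f e| := by
  rw [sum_netOut_eq, sum_filter, sum_filter, ← sum_sub_distrib, cut, sum_filter]
  refine (abs_sum_le_sum_abs _ _).trans (sum_le_sum fun e _ => ?_)
  by_cases hs : G.src e ∈ X <;> by_cases ht : G.tgt e ∈ X <;> simp [hs, ht]

theorem card_cut_add_two_mul_card_inner (X : Finset G.V) :
    #(G.cut X) + 2 * #{e | G.src e ∈ X ∧ G.tgt e ∈ X} = ∑ v ∈ X, G.degree v := by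
  simp only [degree, sum_add_distrib, cut, card_filter, sum_comm (s := X), sum_ite_eq, mul_sum]
  rw [← sum_add_distrib, ← sum_add_distrib]
  refine sum_congr rfl fun e _ => ?_
  by_cases hs : G.src e ∈ X <;> by_cases ht : G.tgt e ∈ X <;> simp [hs, ht]

theorem card_cut_singleton_le (v : G.V) : #(G.cut {v}) ≤ G.degree v := by
  have := G.card_cut_add_two_mul_card_inner {v}
  rw [sum_singleton] at this
  omega

theorem exists_edge_of_adj {u v : G.V} (h : G.toSimpleGraph.Adj u v) :
    ∃ e, s(G.src e, G.tgt e) = s(u, v) := by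
  obtain ⟨-, ⟨e, rfl, rfl⟩ | ⟨e, rfl, rfl⟩⟩ := h
  · exact ⟨e, rfl⟩
  · exact ⟨e, Sym2.eq_swap⟩

theorem card_cut_path_add_four_le {u v w : G.V} (huw : u ≠ w)
    (hu : G.toSimpleGraph.Adj v u) (hw : G.toSimpleGraph.Adj v w) :
    #(G.cut {v, u, w}) + 4 ≤ G.degree v + G.degree u + G.degree w := by
  obtain ⟨e, he⟩ := exists_edge_of_adj hu
  obtain ⟨e', he'⟩ := exists_edge_of_adj hw
  have hne : e ≠ e' := by
    rintro rfl
    exact huw (Sym2.congr_right.1 (he.symm.trans he'))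
  have hinner : 1 < #{a | G.src a ∈ ({v, u, w} : Finset G.V) ∧ G.tgt a ∈ ({v, u, w} : Finset _)} :=
    one_lt_card.2 ⟨e, by rcases Sym2.eq_iff.1 he with ⟨hs, ht⟩ | ⟨hs, ht⟩ <;> simp [hs, ht],
      e', by rcases Sym2.eq_iff.1 he' with ⟨hs, ht⟩ | ⟨hs, ht⟩ <;> simp [hs, ht], hne⟩
  have hdegree := G.card_cut_add_two_mul_card_inner {v, u, w}
  rw [sum_insert (by simp [hu.ne, hw.ne]), sum_pair huw] at hdegree
  omega

end Cut

section BalancedColoring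

variable {G : Multigraph} {c : G.V → ℤˣ}

theorem IsBalancedValuation.sum_eq_zero
    (hc : G.IsBalancedValuation fun v => 2 * c v) : ∑ v, (c v : ℤ) = 0 := by
  have h := hc univ
  have hcut : G.cut univ = ∅ := by simp [cut]
  rw [hcut, card_empty, Nat.cast_zero, abs_nonpos_iff, ← mul_sum] at h
  omega

theorem IsBalancedValuation.card_filter_eq_le_one (hG : ∀ v, G.degree v ≤ 3)
    (hc : G.IsBalancedValuation fun v => 2 * c v) (v : G.V) :
    #{w ∈ G.toSimpleGraph.neighborFinset v | c w = c v} ≤ 1 := by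
  refine card_le_one.2 fun u hu w hw => by_contra fun huw => ?_
  simp only [mem_filter, SimpleGraph.mem_neighborFinset] at hu hw
  have hsum : ∑ x ∈ {v, u, w}, 2 * (c x : ℤ) = 6 * c v := by
    rw [sum_insert (by simp [hu.1.ne, hw.1.ne]), sum_pair huw, hu.2, hw.2]
    ring
  have hcut : |∑ x ∈ {v, u, w}, 2 * (c x : ℤ)| ≤ 5 :=
    (hc {v, u, w}).trans <| by
      have := card_cut_path_add_four_le huw hu.1 hw.1
      have := hG v
      have := hG u
      have := hG w
      omega
  rw [hsum, abs_mul, Int.isUnit_iff_abs_eq.1 (c v).isUnit] at hcut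
  norm_num at hcut

end BalancedColoring

section ModFourFlow

variable {G : Multigraph}

theorem exists_netOut_sub_two_eq (x : G.E → ℝ) {v : G.V} (hv : G.degree v = 3) {n : ℤ}
    (hn : G.netOut x v = 4 * n) (hlt : |G.netOut (fun e => x e - 2) v| < 4) :
    ∃ u : ℤˣ, G.netOut (fun e => x e - 2) v = 2 * (u : ℤ) := by
  obtain ⟨k, hk⟩ : ∃ k : ℤ, k = 2 * n - (#{e | G.src e = v} - #{e | G.tgt e = v}) := ⟨_, rfl⟩
  have hnet : G.netOut (fun e => x e - 2) v = 2 * (k : ℝ) := by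
    rw [netOut_sub_const, hn, hk]
    simp only [zsmul_eq_mul]
    push_cast
    ring
  rw [hnet] at hlt ⊢
  have hk2 : |2 * k| < 4 := mod_cast hlt
  have hkunit : IsUnit k := by
    rw [Int.isUnit_iff]
    rw [abs_lt] at hk2
    simp only [degree] at hv
    omega
  exact ⟨hkunit.unit, rfl⟩

end ModFourFlow

end Multigraph

section ClosedArc

theorem closedArc_eq_image_Icc {r a b : ℝ} (hab : a ≤ b) (hr : b < a + r) :
    closedArc r a b = (fun t : ℝ => (t : AddCircle r)) '' Set.Icc a b := by
  have hr₀ : 0 < r := by linarith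
  have hfract : Int.fract ((b - a) / r) = (b - a) / r := by
    rw [Int.fract_eq_self, div_lt_one hr₀]
    exact ⟨div_nonneg (sub_nonneg.2 hab) hr₀.le, by linarith⟩
  rw [closedArc, hfract, div_mul_cancel₀ _ hr₀.ne', add_sub_cancel]

theorem neg_mem_closedArc {r a b : ℝ} (ha : 0 < a) (hab : a ≤ b) (hr : a + b = r)
    {x : AddCircle r} (hx : x ∈ closedArc r a b) : -x ∈ closedArc r a b := by
  rw [closedArc_eq_image_Icc hab (by linarith)] at hx ⊢
  obtain ⟨t, ⟨hat, htb⟩, rfl⟩ := hx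
  refine ⟨r - t, ⟨by linarith, by linarith⟩, ?_⟩
  simp only [AddCircle.coe_sub, AddCircle.coe_period, zero_sub]

theorem intCast_mem_closedArc_of_not_four_dvd {n : ℤ} (hn : ¬ 4 ∣ n) :
    ((n : ℝ) : AddCircle (4 : ℝ)) ∈ closedArc 4 1 3 := by
  rw [closedArc_eq_image_Icc (by norm_num) (by norm_num)]
  have hmod : 1 ≤ n % 4 ∧ n % 4 ≤ 3 := by omega
  refine ⟨(n % 4 : ℤ), ⟨mod_cast hmod.1, mod_cast hmod.2⟩, ?_⟩
  rw [← sub_eq_zero, ← AddCircle.coe_sub, AddCircle.coe_eq_zero_iff]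
  refine ⟨-(n / 4), ?_⟩
  rw [zsmul_eq_mul]
  exact_mod_cast (by omega : -(n / 4) * 4 = n % 4 - n)

theorem exists_mem_Ioo_coe_eq_of_ne_zero {r : ℝ} (hr : 0 < r) {x : AddCircle r} (hx : x ≠ 0) :
    ∃ t ∈ Set.Ioo 0 r, (t : AddCircle r) = x := by
  have : Fact (0 < r) := ⟨hr⟩
  obtain ⟨⟨t, h₀, hr'⟩, rfl⟩ := (AddCircle.equivIco r 0).symm.surjective x
  have ht : t ≠ 0 := by
    rintro rfl
    exact hx rfl
  exact ⟨t, ⟨h₀.lt_of_ne' ht, by simpa using hr'⟩, rfl⟩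

theorem exists_lift_abs_sub_two {ι : Type*} {f : ι → AddCircle (4 : ℝ)} {i₀ : ι}
    (hf : ∀ i ≠ i₀, f i ∈ closedArc 4 1 3) (hf₀ : f i₀ ≠ 0) :
    ∃ x : ι → ℝ, (∀ i, (x i : AddCircle (4 : ℝ)) = f i) ∧
      (∀ i ≠ i₀, |x i - 2| ≤ 1) ∧ |x i₀ - 2| < 2 := by
  have hlift : ∀ i, ∃ t : ℝ,
      (t : AddCircle (4 : ℝ)) = f i ∧ (i ≠ i₀ → |t - 2| ≤ 1) ∧ |t - 2| < 2 := by
    rw [closedArc_eq_image_Icc (by norm_num) (by norm_num)] at hf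
    intro i
    by_cases hi : i = i₀
    · obtain ⟨t, ⟨h₀, h₄⟩, htf⟩ := exists_mem_Ioo_coe_eq_of_ne_zero four_pos (hi ▸ hf₀)
      exact ⟨t, htf, fun h => absurd hi h, abs_lt.2 ⟨by linarith, by linarith⟩⟩
    · obtain ⟨t, ⟨h₁, h₃⟩, htf⟩ := hf i hi
      have ht : |t - 2| ≤ 1 := abs_le.2 ⟨by linarith, by linarith⟩
      exact ⟨t, htf, fun _ => ht, by linarith⟩
  choose x hxf hx hx₀ using hlift
  exact ⟨x, hxf, hx, hx₀ i₀⟩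

end ClosedArc

theorem Multigraph.exists_isBalancedValuation_of_isFlow {G : Multigraph}
    (hG : ∀ v, G.degree v = 3) {f : G.E → AddCircle (4 : ℝ)} (hf : G.IsFlow f) {e₀ : G.E}
    (hfC : ∀ e ≠ e₀, f e ∈ closedArc 4 1 3) (hf₀ : f e₀ ≠ 0) :
    ∃ c : G.V → ℤˣ, G.IsBalancedValuation fun v => 2 * c v := by
  obtain ⟨x, hxf, hx, hx₀⟩ := exists_lift_abs_sub_two hfC hf₀
  have hcut : ∀ X : Finset G.V,
      |∑ v ∈ X, G.netOut (fun e => x e - 2) v| < #(G.cut X) + 1 := fun X =>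
    (abs_sum_netOut_le _ X).trans_lt (sum_abs_lt_card_add_one hx hx₀ _)
  have hnet : ∀ v, ∃ u : ℤˣ, G.netOut (fun e => x e - 2) v = 2 * (u : ℤ) := by
    intro v
    have hcoe : ((G.netOut x v : ℝ) : AddCircle (4 : ℝ)) = 0 := by
      rw [← isFlow_iff_netOut_eq_zero.1 hf v, ← funext hxf]
      exact (netOut_map (QuotientAddGroup.mk' (AddSubgroup.zmultiples (4 : ℝ))) x v).symm
    obtain ⟨n, hn⟩ := (AddCircle.coe_eq_zero_iff _).1 hcoe
    refine exists_netOut_sub_two_eq x (hG v) (n := n) (by rw [← hn, zsmul_eq_mul, mul_comm]) ?_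
    have hcard : (#(G.cut {v}) : ℝ) ≤ 3 := mod_cast hG v ▸ G.card_cut_singleton_le v
    have := hcut {v}
    rw [sum_singleton] at this
    linarith
  choose c hc using hnet
  refine ⟨c, fun X => ?_⟩
  have h := hcut X
  simp only [hc] at h
  exact Int.lt_add_one_iff.1 (mod_cast h)

section StronglyRegular

open Matrix

variable {V : Type*} [Fintype V] {H : SimpleGraph V} [DecidableRel H.Adj]

theorem compl_adjMatrix_mulVec_of_sum_eq_zero [DecidableEq V] {R : Type*} [Ring R] {x : V → R}
    (hx : ∑ v, x v = 0) : Hᶜ.adjMatrix R *ᵥ x = -x - H.adjMatrix R *ᵥ x := by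
  classical
  have hones : (of 1 : Matrix V V R) *ᵥ x = 0 := by
    ext v
    simpa [mulVec, dotProduct] using hx
  rw [← H.one_add_adjMatrix_add_compl_adjMatrix_eq_of_one (α := R),
    H.compl_adjMatrix_eq_adjMatrix_compl R, add_mulVec, add_mulVec, one_mulVec] at hones
  rw [eq_neg_of_add_eq_zero_right hones, neg_add']

theorem dotProduct_adjMatrix_mulVec_self {R : Type*} [CommRing R] {n k ℓ μ : ℕ}
    (hH : H.IsSRGWith n k ℓ μ) {x : V → R} (hx : ∑ v, x v = 0) :
    (H.adjMatrix R *ᵥ x) ⬝ᵥ (H.adjMatrix R *ᵥ x) =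
      (k - μ) * (x ⬝ᵥ x) + (ℓ - μ) * (x ⬝ᵥ (H.adjMatrix R *ᵥ x)) := by
  classical
  have hsq : (H.adjMatrix R *ᵥ x) ⬝ᵥ (H.adjMatrix R *ᵥ x) = x ⬝ᵥ (H.adjMatrix R ^ 2 *ᵥ x) := by
    rw [sq, ← mulVec_mulVec, dotProduct_mulVec x, ← mulVec_transpose, H.transpose_adjMatrix]
  rw [hsq, hH.matrix_eq, add_mulVec, add_mulVec, smul_mulVec, smul_mulVec, smul_mulVec,
    one_mulVec, compl_adjMatrix_mulVec_of_sum_eq_zero hx]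
  simp only [dotProduct_add, dotProduct_smul, dotProduct_sub, dotProduct_neg]
  simp only [nsmul_eq_mul]
  ring

theorem units_mul_sum_neighborFinset {k : ℕ} (hH : H.IsRegularOfDegree k) (c : V → ℤˣ) (v : V) :
    (c v : ℤ) * ∑ w ∈ H.neighborFinset v, (c w : ℤ) =
      2 * #{w ∈ H.neighborFinset v | c w = c v} - k := by
  have hterm : ∀ w, (c v : ℤ) * c w = 2 * (if c w = c v then 1 else 0) - 1 := by
    intro w
    rcases Int.units_eq_one_or (c v) with hv | hv <;>
      rcases Int.units_eq_one_or (c w) with hw | hw <;> simp [hv, hw]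
  rw [mul_sum, sum_congr rfl fun w _ => hterm w, sum_sub_distrib, ← mul_sum, sum_boole, sum_const,
    H.card_neighborFinset_eq_degree, hH v, nsmul_eq_mul, mul_one]

theorem exists_one_lt_card_filter_eq (hH : H.IsSRGWith 10 3 0 1) (c : V → ℤˣ)
    (hc : ∑ v, (c v : ℤ) = 0) :
    ∃ v, 1 < #{w ∈ H.neighborFinset v | c w = c v} := by
  by_contra! hle
  let s : V → ℤ := fun v => c v * ∑ w ∈ H.neighborFinset v, (c w : ℤ)
  have hs : ∀ v, s v ^ 2 + s v = 0 ∨ s v ^ 2 + s v = 6 := by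
    intro v
    have hsv : s v = 2 * #{w ∈ H.neighborFinset v | c w = c v} - 3 :=
      units_mul_sum_neighborFinset hH.regular c v
    rcases Nat.le_one_iff_eq_zero_or_eq_one.1 (hle v) with h | h <;> simp [hsv, h]
  have hsum : ∑ v, (s v ^ 2 + s v) = 20 := by
    have h := dotProduct_adjMatrix_mulVec_self hH hc
    simp only [dotProduct, SimpleGraph.adjMatrix_mulVec_apply, Int.units_coe_mul_self, sum_const,
      card_univ, hH.card] at h
    have hsq : ∀ v, s v ^ 2 = (∑ w ∈ H.neighborFinset v, (c w : ℤ)) *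
        ∑ w ∈ H.neighborFinset v, (c w : ℤ) := fun v => by
      rw [mul_pow, sq, Int.units_coe_mul_self, one_mul, sq]
    simp only [sum_add_distrib, hsq, h, s]
    norm_num
  have hdvd : (6 : ℤ) ∣ ∑ v, (s v ^ 2 + s v) :=
    dvd_sum fun v _ => by rcases hs v with h | h <;> simp [h]
  rw [hsum] at hdvd
  norm_num at hdvd

end StronglyRegular

section Petersen

theorem petersen_degree : ∀ v, petersen.degree v = 3 := by decide +kernel

theorem petersen_isSRGWith : petersen.toSimpleGraph.IsSRGWith 10 3 0 1 where
  card := by decide +kernel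
  regular := by unfold SimpleGraph.IsRegularOfDegree; decide +kernel
  of_adj := by decide +kernel
  of_not_adj := by unfold Pairwise; decide +kernel

theorem petersen_not_isBalancedValuation (c : petersen.V → ℤˣ) :
    ¬ petersen.IsBalancedValuation fun v => 2 * c v := by
  intro hc
  obtain ⟨v, hv⟩ := exists_one_lt_card_filter_eq petersen_isSRGWith c hc.sum_eq_zero
  exact hv.not_ge (hc.card_filter_eq_le_one (fun v => (petersen_degree v).le) v)

/-- The net number of times the closed walk through the vertices `l` steps from `s` to `t`. -/
def netSteps {α : Type*} [DecidableEq α] (l : List α) (s t : α) : ℤ :=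
  (l.zip (l.rotate 1)).count (s, t) - (l.zip (l.rotate 1)).count (t, s)

/-- `C₁ + 2 C₂`, where the closed walks `C₁` and `C₂` are directed 9-cycles of the Petersen graph,
missing `{2, 3}` and `{0, 1}` respectively, which together use every edge except the one joining
these two vertices. All vertices are first relabelled by `π`. -/
def twoCycleFlow (π : Equiv.Perm (Fin 5)) (e : petersen.E) : ℤ :=
  netSteps (α := Finset (Fin 5))
      [{0, 1}, {2, 4}, {0, 3}, {1, 4}, {0, 2}, {1, 3}, {0, 4}, {1, 2}, {3, 4}]
      (e.1.1.1.map π.toEmbedding) (e.1.2.1.map π.toEmbedding) +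
    2 * netSteps (α := Finset (Fin 5))
      [{0, 2}, {1, 4}, {2, 3}, {0, 4}, {1, 3}, {2, 4}, {0, 3}, {1, 2}, {3, 4}]
      (e.1.1.1.map π.toEmbedding) (e.1.2.1.map π.toEmbedding)

instance {G : Multigraph} {f : G.E → ℤ} : Decidable (G.IsFlow f) := by
  unfold Multigraph.IsFlow; infer_instance

theorem exists_isFlow_twoCycleFlow (e₀ : petersen.E) : ∃ π : Equiv.Perm (Fin 5),
    (e₀.1.1.1.map π.toEmbedding = {0, 1} ∧ e₀.1.2.1.map π.toEmbedding = {2, 3}) ∧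
    petersen.IsFlow (twoCycleFlow π) ∧ ∀ e, 4 ∣ twoCycleFlow π e ↔ e = e₀ := by
  -- Prescribing the image of `e₀` rejects most permutations before any flow is computed.
  revert e₀; decide +kernel

end Petersen

/-- The closed 4-capacity of the g-edge `P*₁₀(u,v)` obtained
from the Petersen graph by deleting one edge `uv` is exactly `{0}`: the values
`t ∈ ℝ/4ℤ` for which some modulo-4 flow on `P*₁₀(u,v) ∪ e₀` takes the value
`t` on the added edge `e₀ = uv` while all edges of `P*₁₀(u,v)` carry values in
`[1,3] ⊆ ℝ/4ℤ` form the set `{0}`. -/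
theorem petersen_closed_4_capacity (e₀ : petersen.E) :
    CPcap 4 (petersen.deleteEdge e₀) (fun _ => closedArc 4 1 3)
      (petersen.src e₀) (petersen.tgt e₀) = {0} := by
  ext t
  have hsymm : ∀ x ∈ closedArc 4 1 3, -x ∈ closedArc 4 1 3 :=
    fun x => neg_mem_closedArc one_pos (by norm_num) (by norm_num)
  rw [Multigraph.mem_CPcap_deleteEdge_iff hsymm, Set.mem_singleton_iff]
  constructor
  · rintro ⟨f, hf, hfC, rfl⟩
    by_contra hf₀
    obtain ⟨c, hc⟩ := Multigraph.exists_isBalancedValuation_of_isFlow petersen_degree hf hfC hf₀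
    exact petersen_not_isBalancedValuation c hc
  · rintro rfl
    obtain ⟨π, -, hf, hdvd⟩ := exists_isFlow_twoCycleFlow e₀
    let φ : ℤ →+ AddCircle (4 : ℝ) := (QuotientAddGroup.mk' _).comp (Int.castAddHom ℝ)
    refine ⟨fun e => φ (twoCycleFlow π e), hf.map φ,
      fun e he => intCast_mem_closedArc_of_not_four_dvd (mt (hdvd e).1 he), ?_⟩
    obtain ⟨k, hk⟩ := (hdvd e₀).2 rfl
    exact (AddCircle.coe_eq_zero_iff _).2 ⟨k, by rw [hk]; simp [mul_comm]⟩
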